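/- Let σ be a permutation of [n] with σ(1) = 1, and for d ≥ 1 let λ_d be the number of cycles of σ of length d (fixed points counting as 1-cycles). Set Λ_d = {i ∈ [n] : σ^d(i) = i}, Λ'_1 = {1}, and for d ≥ 2, Λ'_d = {i ∈ [n] : σ^e(i) = i for some divisor e of d with e < d}. Define a σ-Prüfer sequence to be a family (s_d)_{1 ≤ d ≤ n} where: s_1 is a sequence of length λ_1 − 1 with entries in Λ_1 whose last entry (when λ_1 ≥ 2) lies in Λ'_1; and for each d ≥ 2, s_d is a sequence of length λ_d with entries in Λ_d whose last entry (when λ_d ≥ 1) lies in Λ'_d. Then there is a bijection between the set of σ-Prüfer sequences and the set of σ-invariant labeled trees on [n] (rooted at 1). -/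

import Mathlib

/-!
A tree rooted at `o` is the same as its parent map, and it is invariant under `σ` exactly when the
parent map commutes with `σ`. Such a map is determined by its value at one point of each cycle of
`σ`, and the value at a point of a cycle of length `d` can be any point fixed by `σ ^ d`. Hence the
parent of a vertex lies in a cycle whose length divides `d`: going up the tree, the cycle length
never increases. So the parent pointers lead to the root if and only if, for each `d`, they cannot
stay forever among the cycles of length `d` other than `{o}`.

For a fixed `d`, such an acyclic system of pointers is encoded as by Prüfer: repeatedly remove the
smallest cycle to which nothing points and record its pointer. The recorded entries are all the
pointers not yet removed, so the code shows which cycle is removed at each step, and the last entry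
must point out of the cycles of length `d`, which makes it an element of `Λ'_d`.
-/

/-- The number of cycles of length `d` of a permutation of `Fin n`
(fixed points count as cycles of length 1). -/
noncomputable def cycleCount {n : ℕ} (σ : Equiv.Perm (Fin n)) (d : ℕ) : ℕ :=
  (Finset.univ.filter fun i : Fin n => Function.minimalPeriod (⇑σ) i = d).card / d

/-- The length of the block of a σ-Prüfer sequence associated to cycle length `d`:
`λ_1 − 1` for `d = 1` and `λ_d` for `d ≥ 2`. -/
noncomputable def pruferLen {n : ℕ} (σ : Equiv.Perm (Fin n)) (d : ℕ) : ℕ :=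
  if d = 1 then cycleCount σ 1 - 1 else cycleCount σ d

/-- A σ-Prüfer sequence: a family of blocks, one for each cycle length `d`, where the
block for `d` has length `pruferLen σ d` (this is `0` for `d = 0` and for `d > n`, so
those blocks are trivial), entries of the block for `d` lie in `Λ_d = {i : σ^d i = i}`,
the last entry of the block for `d = 1` is the root `1` (i.e. `0 : Fin n`), and the last
entry of the block for `d ≥ 2` lies in
`Λ'_d = {i : σ^e i = i for some divisor e of d with e < d}`. -/
structure SigmaPruferSeq {n : ℕ} (σ : Equiv.Perm (Fin n)) : Type where
  s : (d : ℕ) → Fin (pruferLen σ d) → Fin n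
  entries_mem : ∀ (d : ℕ) (k : Fin (pruferLen σ d)), (σ ^ d) (s d k) = s d k
  last_one : ∀ h : 0 < pruferLen σ 1,
    (s 1 ⟨pruferLen σ 1 - 1, Nat.sub_lt h Nat.one_pos⟩).val = 0
  last_of_ge_two : ∀ (d : ℕ), 2 ≤ d → ∀ h : 0 < pruferLen σ d,
    ∃ e, e ∣ d ∧ e < d ∧
      (σ ^ e) (s d ⟨pruferLen σ d - 1, Nat.sub_lt h Nat.one_pos⟩) =
        s d ⟨pruferLen σ d - 1, Nat.sub_lt h Nat.one_pos⟩

open Function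

section PruferCode

variable {Q X : Type*} (t : X → Q)

/-- `f : S → X` is acyclic if the pointers `c ↦ t (f c)`, followed as long as they stay in `S`,
always lead out of `S`. -/
def IsAcyclicOn (S : Finset Q) (f : S → X) : Prop :=
  WellFounded fun b c : S => t (f c) = b

variable {t} {S : Finset Q} {f g : S → X} {c : Q}

theorem IsAcyclicOn.exists_leaf (hf : IsAcyclicOn t S f) (hS : S.Nonempty) :
    ∃ c ∈ S, ∀ b, t (f b) ≠ c := by
  have : IsWellFounded S fun b c => t (f c) = b := ⟨hf⟩
  have : Nonempty S := hS.to_subtype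
  obtain ⟨c, hc⟩ := Finite.exists_max (IsWellFounded.rank fun b c : S => t (f c) = b)
  exact ⟨c, c.2, fun b hb => (hc b).not_gt (IsWellFounded.rank_lt_of_rel hb)⟩

variable [LinearOrder Q]

/-- The pointer system `f` with the element `c` removed. -/
def restrictErase (f : S → X) (c : Q) : S.erase c → X :=
  fun b => f ⟨b, Finset.mem_of_mem_erase b.2⟩

theorem IsAcyclicOn.erase (hf : IsAcyclicOn t S f) (c : Q) :
    IsAcyclicOn t (S.erase c) (restrictErase f c) :=
  InvImage.wf (Set.inclusion (S.erase_subset c)) hf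

variable (t S f) in
/-- The set of leaves of the pointer system `f`: the elements of `S` to which nothing points. -/
def leaves : Finset Q := S.filter fun c => ∀ b, t (f b) ≠ c

theorem IsAcyclicOn.of_erase (hc : c ∈ leaves t S f)
    (hf : IsAcyclicOn t (S.erase c) (restrictErase f c)) : IsAcyclicOn t S f := by
  have acc_of_ne : ∀ b : S.erase c,
      Acc (fun b c : S => t (f c) = b) ⟨b, S.erase_subset c b.2⟩ := fun b => by
    induction b using hf.induction with
    | _ b ih =>
      refine ⟨_, fun a ha => ih ⟨a, Finset.mem_erase.2 ⟨?_, a.2⟩⟩ ha⟩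
      exact ha ▸ (Finset.mem_filter.1 hc).2 _
  have acc_of_ne' : ∀ b : S, b ≠ c → Acc (fun b c : S => t (f c) = b) b :=
    fun b hb => acc_of_ne ⟨b, Finset.mem_erase.2 ⟨hb, b.2⟩⟩
  exact ⟨fun b => ⟨b, fun a ha => acc_of_ne' a (ha ▸ (Finset.mem_filter.1 hc).2 b)⟩⟩

variable (t) in
/-- The Prüfer code of a pointer system `f` on `S`: remove the smallest leaf `c`, record `f c`, and
repeat with the remaining elements. -/
def pruferCode (S : Finset Q) (f : S → X) : List X :=
  if h : (leaves t S f).Nonempty then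
    f ⟨(leaves t S f).min' h, Finset.filter_subset _ _ ((leaves t S f).min'_mem h)⟩ ::
      pruferCode (S.erase ((leaves t S f).min' h)) (restrictErase f _)
  else []
termination_by S.card
decreasing_by
  exact Finset.card_erase_lt_of_mem (Finset.filter_subset _ _ ((leaves t S f).min'_mem h))

theorem pruferCode_empty (f : (∅ : Finset Q) → X) : pruferCode t ∅ f = [] := by
  rw [pruferCode, dif_neg (by simp [leaves])]

theorem pruferCode_eq_cons (hcS : c ∈ S) (hc : IsLeast (leaves t S f : Set Q) c) :
    pruferCode t S f = f ⟨c, hcS⟩ :: pruferCode t (S.erase c) (restrictErase f c) := by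
  have h : (leaves t S f).Nonempty := ⟨c, hc.1⟩
  obtain rfl := hc.unique ((leaves t S f).isLeast_min' h)
  rw [pruferCode, dif_pos h]

theorem IsAcyclicOn.exists_isLeast_leaves (hf : IsAcyclicOn t S f) (hS : S.Nonempty) :
    ∃ c ∈ S, IsLeast (leaves t S f : Set Q) c := by
  obtain ⟨c, hcS, hc⟩ := hf.exists_leaf hS
  have h : (leaves t S f).Nonempty := ⟨c, Finset.mem_filter.2 ⟨hcS, hc⟩⟩
  exact ⟨_, Finset.filter_subset _ _ ((leaves t S f).min'_mem h), (leaves t S f).isLeast_min' h⟩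

theorem IsAcyclicOn.induction_leaf {P : ∀ S : Finset Q, (S → X) → Prop}
    (empty : ∀ f, P ∅ f)
    (step : ∀ S f, IsAcyclicOn t S f → ∀ c, c ∈ S → IsLeast (leaves t S f : Set Q) c →
      P (S.erase c) (restrictErase f c) → P S f)
    (hf : IsAcyclicOn t S f) : P S f := by
  induction S using Finset.strongInduction with
  | _ S ih =>
    rcases S.eq_empty_or_nonempty with rfl | hS
    · exact empty f
    · obtain ⟨c, hcS, hc⟩ := hf.exists_isLeast_leaves hS
      exact step S f hf c hcS hc (ih _ (Finset.erase_ssubset hcS) (hf.erase c))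

theorem range_eq_insert_range_restrictErase (hc : c ∈ S) (f : S → X) :
    Set.range f = insert (f ⟨c, hc⟩) (Set.range (restrictErase f c)) := by
  refine Set.Subset.antisymm ?_ (Set.insert_subset ⟨_, rfl⟩ ?_)
  · rintro _ ⟨b, rfl⟩
    rcases eq_or_ne b ⟨c, hc⟩ with rfl | hb
    · exact Set.mem_insert _ _
    · exact Or.inr ⟨⟨b, Finset.mem_erase.2 ⟨Subtype.coe_ne_coe.2 hb, b.2⟩⟩, rfl⟩
  · rintro _ ⟨b, rfl⟩
    exact ⟨_, rfl⟩

theorem IsAcyclicOn.length_pruferCode (hf : IsAcyclicOn t S f) :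
    (pruferCode t S f).length = S.card :=
  hf.induction_leaf (P := fun S f => (pruferCode t S f).length = S.card)
    (fun f => by simp [pruferCode_empty])
    (fun S f _ c hcS hc ih => by
      rw [pruferCode_eq_cons hcS hc, List.length_cons, ih, Finset.card_erase_add_one hcS])

theorem IsAcyclicOn.setOf_mem_pruferCode (hf : IsAcyclicOn t S f) :
    {x | x ∈ pruferCode t S f} = Set.range f :=
  hf.induction_leaf (P := fun S f => {x | x ∈ pruferCode t S f} = Set.range f)
    (fun f => by simp [pruferCode_empty, Set.range_eq_empty])
    (fun S f _ c hcS hc ih => by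
      rw [pruferCode_eq_cons hcS hc, range_eq_insert_range_restrictErase hcS, ← ih]
      ext; simp)

theorem leaves_eq_filter {l : List X} (h : {x | x ∈ l} = Set.range f) :
    leaves t S f = S.filter fun c => ∀ x ∈ l, t x ≠ c := by
  refine Finset.filter_congr fun c _ => ?_
  rw [← Set.forall_mem_range (p := fun x => t x ≠ c), ← h]
  rfl

theorem IsAcyclicOn.target_getLast_pruferCode_notMem (hf : IsAcyclicOn t S f) :
    ∀ h : pruferCode t S f ≠ [], t ((pruferCode t S f).getLast h) ∉ S := by
  refine hf.induction_leaf
    (P := fun S f => ∀ h : pruferCode t S f ≠ [], t ((pruferCode t S f).getLast h) ∉ S)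
    (fun f h => absurd (pruferCode_empty f) h) (fun S f hf c hcS hc ih h => ?_)
  have target_ne : t ((pruferCode t S f).getLast h) ≠ c := by
    obtain ⟨b, hb⟩ := hf.setOf_mem_pruferCode.le (List.getLast_mem h)
    exact hb ▸ (Finset.mem_filter.1 hc.1).2 b
  have target_notMem : t ((pruferCode t S f).getLast h) ∉ S.erase c := by
    simp only [pruferCode_eq_cons hcS hc]
    by_cases htail : pruferCode t (S.erase c) (restrictErase f c) = []
    · have := (hf.erase c).length_pruferCode
      rw [htail, List.length_nil, eq_comm, Finset.card_eq_zero] at this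
      simp [this]
    · rw [List.getLast_cons htail]
      exact ih htail
  exact fun hmem => target_notMem (Finset.mem_erase.2 ⟨target_ne, hmem⟩)

theorem IsAcyclicOn.pruferCode_inj (hf : IsAcyclicOn t S f) (hg : IsAcyclicOn t S g)
    (h : pruferCode t S f = pruferCode t S g) : f = g := by
  revert g
  refine hf.induction_leaf
    (P := fun S f => ∀ {g}, IsAcyclicOn t S g → pruferCode t S f = pruferCode t S g → f = g)
    (fun f g _ _ => Subsingleton.elim f g) (fun S f hf c hcS hc ih g hg hfg => ?_)
  have hleaves : leaves t S f = leaves t S g := by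
    rw [leaves_eq_filter hf.setOf_mem_pruferCode, leaves_eq_filter hg.setOf_mem_pruferCode, hfg]
  rw [pruferCode_eq_cons hcS hc, pruferCode_eq_cons hcS (hleaves ▸ hc), List.cons.injEq] at hfg
  have hrestrict := ih (hg.erase c) hfg.2
  funext b
  rcases eq_or_ne b ⟨c, hcS⟩ with rfl | hb
  · exact hfg.1
  · exact congrFun hrestrict ⟨b, Finset.mem_erase.2 ⟨Subtype.coe_ne_coe.2 hb, b.2⟩⟩

/-- The last entry of `l` hits no element of `S`, so the others hit at most `l.length - 1`. -/
theorem exists_mem_forall_target_ne {l : List X} (hlen : l.length ≤ S.card) (hl : l ≠ [])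
    (hlast : t (l.getLast hl) ∉ S) : ∃ c ∈ S, ∀ x ∈ l, t x ≠ c := by
  classical
  by_contra! h
  have hsub : S ⊆ (l.dropLast.map t).toFinset := fun c hc => by
    obtain ⟨x, hx, rfl⟩ := h c hc
    rw [← List.dropLast_append_getLast hl, List.mem_append, List.mem_singleton] at hx
    rcases hx with hx | rfl
    · exact List.mem_toFinset.2 (List.mem_map_of_mem hx)
    · exact absurd hc hlast
  have hcard : S.card ≤ l.length - 1 := by
    simpa using (Finset.card_le_card hsub).trans (List.toFinset_card_le _)
  have := List.length_pos_of_ne_nil hl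
  omega

theorem exists_pruferCode_eq {l : List X} (hlen : l.length = S.card)
    (hlast : ∀ h : l ≠ [], t (l.getLast h) ∉ S) :
    ∃ f, IsAcyclicOn t S f ∧ pruferCode t S f = l := by
  induction l generalizing S with
  | nil =>
    obtain rfl := Finset.card_eq_zero.1 hlen.symm
    exact ⟨isEmptyElim, ⟨isEmptyElim⟩, pruferCode_empty _⟩
  | cons x l ih =>
    have hunused : (S.filter fun c => ∀ y ∈ x :: l, t y ≠ c).Nonempty := by
      obtain ⟨c, hc⟩ := exists_mem_forall_target_ne hlen.le (List.cons_ne_nil x l) (hlast _)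
      exact ⟨c, Finset.mem_filter.2 hc⟩
    obtain ⟨c, hc⟩ : ∃ c, IsLeast (S.filter fun c => ∀ y ∈ x :: l, t y ≠ c : Set Q) c :=
      ⟨_, Finset.isLeast_min' _ hunused⟩
    have hcS : c ∈ S := (Finset.mem_filter.1 hc.1).1
    obtain ⟨g, hg, rfl⟩ : ∃ g, IsAcyclicOn t (S.erase c) g ∧ pruferCode t (S.erase c) g = l := by
      refine ih ?_ fun h hmem => hlast (List.cons_ne_nil x l) ?_
      · rw [Finset.card_erase_of_mem hcS, ← hlen, List.length_cons, Nat.add_sub_cancel]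
      · rw [List.getLast_cons h]
        exact Finset.mem_of_mem_erase hmem
    let f : S → X := fun b =>
      if hb : (b : Q) = c then x else g ⟨b, Finset.mem_erase.2 ⟨hb, b.2⟩⟩
    have hfc : f ⟨c, hcS⟩ = x := dif_pos rfl
    have hfg : restrictErase f c = g := funext fun b => dif_neg (Finset.ne_of_mem_erase b.2)
    have hrange : {y | y ∈ x :: pruferCode t (S.erase c) g} = Set.range f := by
      rw [range_eq_insert_range_restrictErase hcS, hfc, hfg, ← hg.setOf_mem_pruferCode]
      ext; simp
    rw [← leaves_eq_filter hrange] at hc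
    refine ⟨f, IsAcyclicOn.of_erase hc.1 (hfg ▸ hg), ?_⟩
    rw [pruferCode_eq_cons hcS hc, hfc, hfg]

variable (t S) in
/-- The Prüfer bijection for acyclic pointer systems on `S`. An empty system has no last entry, so
the condition on the code is then void. -/
noncomputable def pruferCodeEquiv :
    {f : S → X // IsAcyclicOn t S f} ≃
      {s : Fin S.card → X //
        ∀ h : 0 < S.card, t (s ⟨S.card - 1, Nat.sub_lt h Nat.one_pos⟩) ∉ S} := by
  refine Equiv.ofBijective (fun f => ⟨fun i => (pruferCode t S f.1)[i.1]'?_, fun h => ?_⟩) ⟨?_, ?_⟩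
  · exact i.2.trans_eq f.2.length_pruferCode.symm
  · have hne : pruferCode t S f.1 ≠ [] := by
      rwa [← List.length_pos_iff, f.2.length_pruferCode]
    have := f.2.target_getLast_pruferCode_notMem hne
    simpa only [List.getLast_eq_getElem, f.2.length_pruferCode] using this
  · intro f g hfg
    refine Subtype.ext (f.2.pruferCode_inj g.2 (List.ext_getElem ?_ fun i hi _ => ?_))
    · rw [f.2.length_pruferCode, g.2.length_pruferCode]
    · exact congrFun (congrArg Subtype.val hfg) ⟨i, hi.trans_eq f.2.length_pruferCode⟩
  · rintro ⟨s, hs⟩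
    obtain ⟨f, hf, hcode⟩ := exists_pruferCode_eq (t := t) (S := S) (l := List.ofFn s)
      List.length_ofFn fun h => by
        rw [List.getLast_ofFn]
        exact hs (by simpa [Nat.pos_iff_ne_zero] using h)
    exact ⟨⟨f, hf⟩, Subtype.ext (funext fun i => by simp [hcode])⟩

end PruferCode

section ParentMap

variable {V : Type*} {o : V} {p q : V → V}

/-- `p` is the parent map of a tree rooted at `o`: iterating it leads every vertex to `o`, and, by
convention, `o` is its own parent. -/
def IsParentMap (o : V) (p : V → V) : Prop :=
  p o = o ∧ ∀ v, ∃ k, p^[k] v = o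

/-- The graph whose edges join each vertex `v` with `p v ≠ v` to `p v`. -/
def parentGraph (p : V → V) : SimpleGraph V :=
  SimpleGraph.fromRel fun v w => p v = w

theorem IsParentMap.eq_root_of_isPeriodicPt (hp : IsParentMap o p) {n : ℕ} {v : V} (hn : 0 < n)
    (hv : IsPeriodicPt p n v) : v = o := by
  obtain ⟨k, hk⟩ := hp.2 v
  calc v = p^[k * n] v := (hv.const_mul k).symm
    _ = p^[k * n - k] (p^[k] v) := by
      rw [← iterate_add_apply, Nat.sub_add_cancel (Nat.le_mul_of_pos_right k hn)]
    _ = o := by rw [hk, iterate_fixed hp.1]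

theorem IsParentMap.adj (hp : IsParentMap o p) {v : V} (hv : v ≠ o) :
    (parentGraph p).Adj v (p v) :=
  ⟨fun h => hv (hp.eq_root_of_isPeriodicPt one_pos h.symm), Or.inl rfl⟩

theorem IsParentMap.forall_adj {P : V → V → Prop} (hp : IsParentMap o p)
    (symm : ∀ v w, P v w → P w v) (h : ∀ v, v ≠ o → P v (p v)) {v w : V}
    (hvw : (parentGraph p).Adj v w) : P v w := by
  obtain ⟨hne, rfl | rfl⟩ := hvw
  · exact h v fun hv => hne (by rw [hv, hp.1])
  · exact symm _ _ (h w fun hw => hne (by rw [hw, hp.1]))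

theorem IsParentMap.connected (hp : IsParentMap o p) : (parentGraph p).Connected := by
  have reachable_root : ∀ k v, p^[k] v = o → (parentGraph p).Reachable v o := by
    intro k
    induction k with
    | zero => rintro v rfl; rfl
    | succ k ih =>
      intro v hv
      rcases eq_or_ne v o with rfl | hvo
      · rfl
      · exact (hp.adj hvo).reachable.trans (ih _ hv)
  refine (SimpleGraph.connected_iff_exists_forall_reachable _).2 ⟨o, fun v => ?_⟩
  obtain ⟨k, hk⟩ := hp.2 v
  exact (reachable_root k v hk).symm

/-- Once the edge from `v` to its parent is deleted, no walk leaves the set of descendants of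
`v`. -/
theorem IsParentMap.isBridge (hp : IsParentMap o p) {v : V} (hv : v ≠ o) :
    (parentGraph p).IsBridge s(v, p v) := by
  rw [SimpleGraph.isBridge_iff]
  have adj_descendant : ∀ u w, ((parentGraph p).deleteEdges {s(v, p v)}).Adj u w →
      (∃ k, p^[k] u = v) → ∃ k, p^[k] w = v := by
    rintro u w huw ⟨k, hk⟩
    rw [SimpleGraph.deleteEdges_adj] at huw
    obtain ⟨⟨-, rfl | rfl⟩, hne⟩ := huw
    · cases k with
      | zero => exact absurd (by rw [← hk]; rfl) hne
      | succ k => exact ⟨k, hk⟩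
    · exact ⟨k + 1, hk⟩
  rintro ⟨walk⟩
  have walk_descendant : ∀ u w, ((parentGraph p).deleteEdges {s(v, p v)}).Walk u w →
      (∃ k, p^[k] u = v) → ∃ k, p^[k] w = v := fun u w walk => by
    induction walk with
    | nil => exact id
    | cons hadj _ ih => exact fun hu => ih (adj_descendant _ _ hadj hu)
  obtain ⟨k, hk⟩ := walk_descendant _ _ walk ⟨0, rfl⟩
  exact hv (hp.eq_root_of_isPeriodicPt k.succ_pos hk)

theorem IsParentMap.isTree (hp : IsParentMap o p) : (parentGraph p).IsTree := by
  refine ⟨hp.connected, SimpleGraph.isAcyclic_iff_forall_adj_isBridge.2 fun v w hvw => ?_⟩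
  refine hp.forall_adj (P := fun v w => (parentGraph p).IsBridge s(v, w)) ?_ ?_ hvw
  · exact fun v w h => Sym2.eq_swap ▸ h
  · exact fun v hv => hp.isBridge hv

/-- If `p v ≠ q v`, then the edge from `v` to `p v` forces `q (p v) = v`; as `p` and `q` agree on
`p v`, which is nearer to the root, `v` would be periodic for `p`. -/
theorem IsParentMap.parentGraph_inj (hp : IsParentMap o p) (hq : IsParentMap o q)
    (h : parentGraph p = parentGraph q) : p = q := by
  have eq_of_iterate : ∀ k v, p^[k] v = o → p v = q v := by
    intro k
    induction k with
    | zero => rintro v rfl; exact hp.1.trans hq.1.symm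
    | succ k ih =>
      intro v hv
      rcases eq_or_ne v o with rfl | hvo
      · exact hp.1.trans hq.1.symm
      · rcases (h ▸ hp.adj hvo : (parentGraph q).Adj v (p v)).2 with hqv | hqpv
        · exact hqv.symm
        · exact absurd (hp.eq_root_of_isPeriodicPt two_pos ((ih _ hv).trans hqpv)) hvo
  funext v
  obtain ⟨k, hk⟩ := hp.2 v
  exact eq_of_iterate k v hk

theorem exists_adj_dist_lt {G : SimpleGraph V} (hG : G.Connected) {v : V} (hv : v ≠ o) :
    ∃ w, G.Adj v w ∧ G.dist w o < G.dist v o := by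
  obtain ⟨walk, hwalk⟩ := hG.exists_walk_length_eq_dist v o
  cases walk with
  | nil => exact absurd rfl hv
  | cons hadj tail =>
    exact ⟨_, hadj, hwalk ▸ Nat.lt_succ_of_le (SimpleGraph.dist_le tail)⟩

theorem exists_isParentMap_parentGraph_eq (o : V) {T : SimpleGraph V} (hT : T.IsTree) :
    ∃ p, IsParentMap o p ∧ parentGraph p = T := by
  classical
  choose! next adj_next dist_next using fun v (hv : v ≠ o) => exists_adj_dist_lt hT.1 hv
  let p : V → V := update next o o
  have hpo : p o = o := update_self ..
  have hpv : ∀ v, v ≠ o → p v = next v := fun v hv => update_of_ne hv ..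
  have hp : IsParentMap o p := by
    refine ⟨hpo, fun v => ?_⟩
    induction h : T.dist v o using Nat.strong_induction_on generalizing v with
    | _ d ih =>
      subst h
      rcases eq_or_ne v o with rfl | hv
      · exact ⟨0, rfl⟩
      · obtain ⟨k, hk⟩ := ih _ (hpv v hv ▸ dist_next v hv) (p v) rfl
        exact ⟨k + 1, hk⟩
  have hle : parentGraph p ≤ T := fun v w hvw =>
    hp.forall_adj (P := T.Adj) (fun _ _ h => h.symm) (fun v hv => hpv v hv ▸ adj_next v hv) hvw
  exact ⟨p, hp, ((SimpleGraph.isTree_iff_minimal_connected.1 hT).eq_of_le hp.connected hle)⟩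

theorem IsParentMap.conj (hp : IsParentMap o p) {σ : Equiv.Perm V} (hσ : σ o = o) :
    IsParentMap o (σ.symm ∘ p ∘ σ) := by
  have hσ' : σ.symm o = o := σ.symm_apply_eq.2 hσ.symm
  refine ⟨by simp [hσ, hp.1, hσ'], fun v => ?_⟩
  obtain ⟨k, hk⟩ := hp.2 (σ v)
  have hconj : Semiconj σ (σ.symm ∘ p ∘ σ) p := fun v => σ.apply_symm_apply _
  exact ⟨k, σ.injective (by rw [(hconj.iterate_right k).eq, hk, hσ])⟩

theorem parentGraph_conj_adj (p : V → V) (σ : Equiv.Perm V) (v w : V) :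
    (parentGraph (σ.symm ∘ p ∘ σ)).Adj v w ↔ (parentGraph p).Adj (σ v) (σ w) := by
  simp [parentGraph, Equiv.symm_apply_eq]

theorem IsParentMap.parentGraph_invariant_iff (hp : IsParentMap o p) {σ : Equiv.Perm V}
    (hσ : σ o = o) :
    (∀ v w, (parentGraph p).Adj v w ↔ (parentGraph p).Adj (σ v) (σ w)) ↔ Semiconj p σ σ := by
  refine ⟨fun h v => ?_, fun h v w => ?_⟩
  · have hconj : p = σ.symm ∘ p ∘ σ := hp.parentGraph_inj (hp.conj hσ) <| by
      ext v w
      rw [h, parentGraph_conj_adj]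
    exact ((σ.symm_apply_eq).1 (congrFun hconj v).symm)
  · simp [parentGraph, h.eq]

/-- Rooted at a fixed point `o` of `σ`, a `σ`-invariant tree is the same as its parent map, which
commutes with `σ`. -/
noncomputable def equivariantParentMapEquiv (σ : Equiv.Perm V) (hσ : σ o = o) :
    {p : V → V // IsParentMap o p ∧ Semiconj p σ σ} ≃
      {T : SimpleGraph V // T.IsTree ∧ ∀ v w, T.Adj v w ↔ T.Adj (σ v) (σ w)} := by
  refine Equiv.ofBijective (fun p => ⟨parentGraph p, p.2.1.isTree,
    (p.2.1.parentGraph_invariant_iff hσ).2 p.2.2⟩) ⟨fun p q hpq => ?_, ?_⟩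
  · exact Subtype.ext (p.2.1.parentGraph_inj q.2.1 (congrArg Subtype.val hpq))
  · rintro ⟨T, hT, hTσ⟩
    obtain ⟨p, hp, rfl⟩ := exists_isParentMap_parentGraph_eq o hT
    exact ⟨⟨p, hp, (hp.parentGraph_invariant_iff hσ).1 hTσ⟩, rfl⟩

end ParentMap

section Cycles

variable {V W : Type*} {σ : Equiv.Perm V} {τ : Equiv.Perm W}

variable (σ) in
/-- The cycles of the permutation `σ`, as a quotient of its domain. -/
abbrev Cycles : Type _ :=
  Quotient (Equiv.Perm.SameCycle.setoid σ)

theorem minimalPeriod_eq_of_sameCycle {v w : V} (h : σ.SameCycle v w) :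
    minimalPeriod σ v = minimalPeriod σ w := by
  obtain ⟨i, rfl⟩ := h
  refine minimalPeriod_eq_minimalPeriod_iff.2 fun n => ?_
  have hcomm : (σ ^ n) ((σ ^ i) v) = (σ ^ i) ((σ ^ n) v) :=
    Equiv.congr_fun ((Commute.refl σ).zpow_left i |>.pow_right n).eq.symm v
  simp only [IsPeriodicPt, IsFixedPt, Equiv.Perm.iterate_eq_pow, hcomm,
    EmbeddingLike.apply_eq_iff_eq]

variable (σ) in
/-- The length of a cycle; an infinite cycle has length `0`. -/
noncomputable def cycleLength : Cycles σ → ℕ :=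
  Quotient.lift (minimalPeriod σ) fun _ _ => minimalPeriod_eq_of_sameCycle

theorem cycleLength_pos [Finite V] (q : Cycles σ) : 0 < cycleLength σ q := by
  induction q using Quotient.ind with
  | _ v => exact minimalPeriod_pos_of_mem_periodicPts (σ.injective.mem_periodicPts v)

theorem pow_apply_eq_self_iff_minimalPeriod_dvd {d : ℕ} {v : V} :
    (σ ^ d) v = v ↔ minimalPeriod σ v ∣ d :=
  MulAction.pow_smul_eq_iff_minimalPeriod_dvd (a := σ)

theorem natCard_cycle (q : Cycles σ) : Nat.card {v // (⟦v⟧ : Cycles σ) = q} = cycleLength σ q := by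
  induction q using Quotient.ind with
  | _ x =>
    have mem_orbit_iff : ∀ v,
        (⟦v⟧ : Cycles σ) = ⟦x⟧ ↔ v ∈ MulAction.orbit (Subgroup.zpowers σ) x := fun v => by
      rw [Quotient.eq_iff_equiv, MulAction.mem_orbit_iff, Subgroup.exists_zpowers]
      exact Equiv.Perm.sameCycle_comm
    calc Nat.card {v // (⟦v⟧ : Cycles σ) = ⟦x⟧}
        = Nat.card (MulAction.orbit (Subgroup.zpowers σ) x) :=
          Nat.card_congr (Equiv.subtypeEquivRight mem_orbit_iff)
      _ = minimalPeriod σ x :=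
          (Nat.card_congr (MulAction.orbitZPowersEquiv σ x)).trans (Nat.card_zmod _)

theorem natCard_minimalPeriod_eq [Finite V] (d : ℕ) :
    Nat.card {v // minimalPeriod σ v = d} = {q : Cycles σ | cycleLength σ q = d}.ncard * d := by
  classical
  have := Fintype.ofFinite {q : Cycles σ // cycleLength σ q = d}
  calc Nat.card {v // minimalPeriod σ v = d}
      = Nat.card (Σ q : {q : Cycles σ // cycleLength σ q = d}, {v // (⟦v⟧ : Cycles σ) = q}) :=
        Nat.card_congr (Equiv.sigmaSubtypeFiberEquivSubtype (Quotient.mk _)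
          (q := fun q : Cycles σ => cycleLength σ q = d) fun _ => Iff.rfl).symm
    _ = ∑ _ : {q : Cycles σ // cycleLength σ q = d}, d := by
        rw [Nat.card_sigma]
        exact Finset.sum_congr rfl fun q _ => (natCard_cycle q.1).trans q.2
    _ = {q : Cycles σ | cycleLength σ q = d}.ncard * d := by
        rw [Finset.sum_const, Finset.card_univ, smul_eq_mul, ← Nat.card_eq_fintype_card]
        rfl

theorem zpow_apply_eq_zpow_apply_iff_dvd {i j : ℤ} {v : V} :
    (σ ^ i) v = (σ ^ j) v ↔ (minimalPeriod σ v : ℤ) ∣ i - j := by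
  refine Iff.trans ?_ (MulAction.zpow_smul_eq_iff_minimalPeriod_dvd (a := σ))
  rw [sub_eq_neg_add, zpow_add, mul_smul, zpow_neg, inv_smul_eq_iff]
  rfl

theorem exists_zpow_out_eq (v : V) : ∃ i : ℤ, (σ ^ i) (⟦v⟧ : Cycles σ).out = v :=
  Quotient.mk_out (s := Equiv.Perm.SameCycle.setoid σ) v

theorem semiconj_zpow {p : V → W} (hp : Semiconj p σ τ) (i : ℤ) :
    Semiconj p ⇑(σ ^ i) ⇑(τ ^ i) := by
  have hpow : ∀ k : ℕ, Semiconj p ⇑(σ ^ k) ⇑(τ ^ k) := fun k => by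
    simpa only [Equiv.Perm.iterate_eq_pow] using hp.iterate_right k
  obtain ⟨k, rfl | rfl⟩ := i.eq_nat_or_neg
  · simpa only [zpow_natCast] using hpow k
  · simp only [zpow_neg, zpow_natCast]
    exact (hpow k).inverses_right (σ ^ k).right_inv (τ ^ k).left_inv

variable (τ) in
/-- The equivariant map with value `f q` at the representative `q.out` of each cycle `q`. -/
noncomputable def equivariantExtension (f : Cycles σ → W) (v : V) : W :=
  (τ ^ (exists_zpow_out_eq (σ := σ) v).choose) (f ⟦v⟧)

theorem equivariantExtension_zpow_out {f : Cycles σ → W}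
    (hf : ∀ q, (τ ^ cycleLength σ q) (f q) = f q) (q : Cycles σ) (i : ℤ) :
    equivariantExtension τ f ((σ ^ i) q.out) = (τ ^ i) (f q) := by
  have hq : (⟦(σ ^ i) q.out⟧ : Cycles σ) = q :=
    (Quotient.sound (s := Equiv.Perm.SameCycle.setoid σ) ⟨-i, by simp⟩).trans q.out_eq
  have hout : minimalPeriod σ q.out = cycleLength σ q := congrArg (cycleLength σ) q.out_eq
  have eq_of_zpow_out_eq : ∀ q', q' = q → ∀ j : ℤ, (σ ^ j) q'.out = (σ ^ i) q.out →
      (τ ^ j) (f q') = (τ ^ i) (f q) := by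
    rintro _ rfl j hj
    rw [zpow_apply_eq_zpow_apply_iff_dvd, hout] at hj
    exact zpow_apply_eq_zpow_apply_iff_dvd.2 <|
      (Int.natCast_dvd_natCast.2 (pow_apply_eq_self_iff_minimalPeriod_dvd.1 (hf _))).trans hj
  exact eq_of_zpow_out_eq _ hq _ (exists_zpow_out_eq (σ := σ) _).choose_spec

variable (σ τ) in
/-- An equivariant map is determined by one value on each cycle, which can be any point whose period
divides the length of the cycle. -/
noncomputable def equivariantMapEquiv :
    {p : V → W // Semiconj p σ τ} ≃
      {f : Cycles σ → W // ∀ q, (τ ^ cycleLength σ q) (f q) = f q} where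
  toFun p := ⟨fun q => p.1 q.out, fun q => by
    have hout : (σ ^ cycleLength σ q) q.out = q.out :=
      pow_apply_eq_self_iff_minimalPeriod_dvd.2 (congrArg (cycleLength σ) q.out_eq).dvd
    simpa only [zpow_natCast, hout] using ((semiconj_zpow p.2 (cycleLength σ q)).eq q.out).symm⟩
  invFun f := ⟨equivariantExtension τ f.1, fun v => by
    obtain ⟨i, hi⟩ := exists_zpow_out_eq (σ := σ) v
    rw [← hi, ← Equiv.Perm.mul_apply, ← zpow_one_add, equivariantExtension_zpow_out f.2,
      equivariantExtension_zpow_out f.2, zpow_one_add, Equiv.Perm.mul_apply]⟩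
  left_inv p := Subtype.ext <| funext fun v =>
    ((semiconj_zpow p.2 _).eq _).symm.trans
      (congrArg p.1 (exists_zpow_out_eq (σ := σ) v).choose_spec)
  right_inv f := Subtype.ext <| funext fun q => equivariantExtension_zpow_out f.2 q 0

end Cycles

section Levels

variable {Q ι : Type*} [PartialOrder ι] [WellFoundedLT ι] {root : Q} {π : Q → Q} {ℓ : Q → ι}
  {S : ι → Finset Q}

theorem isParentMap_iff_forall_isAcyclicOn (hroot : π root = root) (hℓ : ∀ q, ℓ (π q) ≤ ℓ q)
    (hS : ∀ d q, q ∈ S d ↔ ℓ q = d ∧ q ≠ root) :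
    IsParentMap root π ↔ ∀ d, IsAcyclicOn π (S d) Subtype.val := by
  refine ⟨fun h d => ?_, fun h => ⟨hroot, fun q => ?_⟩⟩
  · have acc_of_iterate : ∀ k (c : S d), π^[k] c = root → Acc (fun b c : S d => π c = b) c := by
      intro k
      induction k with
      | zero => exact fun c hc => absurd hc ((hS d c).1 c.2).2
      | succ k ih => exact fun c hc => ⟨c, fun b hb => ih b (hb ▸ hc)⟩
    exact ⟨fun c => (h.2 c).elim fun k hk => acc_of_iterate k c hk⟩
  · induction hd : ℓ q using WellFoundedLT.induction generalizing q with
    | _ d ih_level =>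
      have exists_iterate : ∀ c : S d, ∃ k, π^[k] c = root := fun c => by
        induction c using (h d).induction with
        | _ c ih =>
          obtain ⟨k, hk⟩ : ∃ k, π^[k] (π c) = root := by
            by_cases hmem : π c ∈ S d
            · exact ih ⟨π c, hmem⟩ rfl
            · rcases eq_or_ne (π c) root with hc | hc
              · exact ⟨0, hc⟩
              · have hle : ℓ (π c) ≤ d := (hℓ c).trans_eq ((hS d c).1 c.2).1
                exact ih_level _ (hle.lt_of_ne fun h => hmem ((hS d _).2 ⟨h, hc⟩)) _ rfl
          exact ⟨k + 1, hk⟩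
      rcases eq_or_ne q root with rfl | hq
      · exact ⟨0, rfl⟩
      · exact exists_iterate ⟨q, (hS d q).2 ⟨hd, hq⟩⟩

end Levels

section Blocks

variable {V : Type*} {σ : Equiv.Perm V} {o : V}

theorem mk_eq_mk_root_iff (hσ : σ o = o) {v : V} : (⟦v⟧ : Cycles σ) = ⟦o⟧ ↔ v = o := by
  rw [Quotient.eq_iff_equiv]
  refine ⟨fun ⟨i, hi⟩ => ?_, ?_⟩
  · exact (σ ^ i).injective <|
      hi.trans (Equiv.Perm.zpow_apply_eq_self_of_apply_eq_self hσ i).symm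
  · rintro rfl
    rfl

theorem isParentMap_iff_isParentMap_cycles (hσ : σ o = o) {p : V → V} (hp : Semiconj p σ σ) :
    IsParentMap o p ↔ IsParentMap (⟦o⟧ : Cycles σ) fun q => ⟦p q.out⟧ := by
  have hmk : Semiconj (Quotient.mk _) p fun q : Cycles σ => ⟦p q.out⟧ := fun v => by
    obtain ⟨i, hi⟩ := exists_zpow_out_eq (σ := σ) v
    refine (Quotient.sound (s := Equiv.Perm.SameCycle.setoid σ) ⟨i, ?_⟩).symm
    rw [← (semiconj_zpow hp i).eq, hi]
  have iterate_eq_root_iff : ∀ k v,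
      (fun q => (⟦p q.out⟧ : Cycles σ))^[k] ⟦v⟧ = ⟦o⟧ ↔ p^[k] v = o := fun k v => by
    rw [← mk_eq_mk_root_iff hσ, (hmk.iterate_right k).eq]
  rw [IsParentMap, IsParentMap, Quotient.forall]
  simp only [iterate_eq_root_iff]
  exact and_congr (iterate_eq_root_iff 1 o).symm Iff.rfl

variable (σ) in
/-- The points fixed by `σ ^ d`; the set `Λ_d` of the paper. -/
abbrev PowFixed (d : ℕ) : Type _ :=
  {v : V // (σ ^ d) v = v}

/-- The cycle through a point of `Λ_d`. -/
def PowFixed.cycle {d : ℕ} (x : PowFixed σ d) : Cycles σ :=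
  ⟦x.1⟧

variable (o) in
/-- Membership of a point `x` of `Λ_d` in the set `Λ'_d` of admissible last entries. For `d ≥ 2`
this says that the period of `x`, which divides `d`, is not `d` itself; for `d = 1` only `o` is
admissible. -/
def PowFixed.IsTerminal {d : ℕ} (x : PowFixed σ d) : Prop :=
  minimalPeriod σ x.1 = d → x.1 = o

theorem PowFixed.minimalPeriod_dvd {d : ℕ} (x : PowFixed σ d) : minimalPeriod σ x.1 ∣ d :=
  pow_apply_eq_self_iff_minimalPeriod_dvd.1 x.2

theorem PowFixed.isTerminal_one_iff {x : PowFixed σ 1} : x.IsTerminal o ↔ x.1 = o :=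
  imp_iff_right (Nat.dvd_one.1 x.minimalPeriod_dvd)

theorem PowFixed.isTerminal_iff_exists_dvd_lt (hσ : σ o = o) {d : ℕ} (hd : 2 ≤ d)
    {x : PowFixed σ d} : x.IsTerminal o ↔ ∃ e, e ∣ d ∧ e < d ∧ (σ ^ e) x.1 = x.1 := by
  have hroot : minimalPeriod σ o = 1 := minimalPeriod_eq_one_iff_isFixedPt.2 hσ
  constructor
  · intro h
    have hne : minimalPeriod σ x.1 ≠ d := fun hx => by
      rw [h hx, hroot] at hx
      omega
    exact ⟨_, x.minimalPeriod_dvd, (Nat.le_of_dvd (by omega) x.minimalPeriod_dvd).lt_of_ne hne,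
      pow_apply_eq_self_iff_minimalPeriod_dvd.2 dvd_rfl⟩
  · rintro ⟨e, hed, hlt, hfix⟩ hx
    have hde : d ∣ e := hx ▸ pow_apply_eq_self_iff_minimalPeriod_dvd.1 hfix
    exact absurd (Nat.dvd_antisymm hed hde) hlt.ne

variable (σ o) in
/-- A block of a Prüfer sequence: `k` points of `Λ_d`, the last of which lies in `Λ'_d`. -/
abbrev PruferBlock (d k : ℕ) : Type _ :=
  {s : Fin k → PowFixed σ d // ∀ h : 0 < k, (s ⟨k - 1, Nat.sub_lt h Nat.one_pos⟩).IsTerminal o}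

variable [Finite V]

variable (σ o) in
/-- The cycles of length `d` of `σ`, without the cycle of the root `o`. -/
noncomputable def nonrootCycles (d : ℕ) : Finset (Cycles σ) :=
  (Set.toFinite {q | cycleLength σ q = d ∧ q ≠ ⟦o⟧}).toFinset

theorem mem_nonrootCycles {d : ℕ} {q : Cycles σ} :
    q ∈ nonrootCycles σ o d ↔ cycleLength σ q = d ∧ q ≠ ⟦o⟧ := by
  simp [nonrootCycles]

open scoped Classical in
/-- Sorting the cycles by length: a map on the cycles with value `o` at the root cycle and value in
`Λ_d` at every cycle of length `d` is a family of maps, one for each length. -/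
noncomputable def cyclesMapEquivPi (hσ : σ o = o) :
    {f : Cycles σ → V // f ⟦o⟧ = o ∧ ∀ q, (σ ^ cycleLength σ q) (f q) = f q} ≃
      ∀ d, nonrootCycles σ o d → PowFixed σ d where
  toFun f d q := ⟨f.1 q, by simpa only [(mem_nonrootCycles.1 q.2).1] using f.2.2 q⟩
  invFun F := ⟨fun q =>
      if h : q = ⟦o⟧ then o else (F (cycleLength σ q) ⟨q, mem_nonrootCycles.2 ⟨rfl, h⟩⟩).1,
    dif_pos rfl, fun q => by
      dsimp only
      split_ifs
      · exact Equiv.Perm.pow_apply_eq_self_of_apply_eq_self hσ _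
      · exact (F (cycleLength σ q) _).2⟩
  left_inv f := Subtype.ext <| funext fun q => by
    dsimp only
    split_ifs with h
    · rw [h, f.2.1]
    · rfl
  right_inv F := funext fun d => funext fun ⟨q, hq⟩ => Subtype.ext <| by
    obtain ⟨rfl, hne⟩ := mem_nonrootCycles.1 hq
    exact dif_neg hne

theorem isParentMap_cycles_iff_forall_isAcyclicOn (hσ : σ o = o)
    (f : {f : Cycles σ → V // f ⟦o⟧ = o ∧ ∀ q, (σ ^ cycleLength σ q) (f q) = f q}) :
    IsParentMap (⟦o⟧ : Cycles σ) (fun q => ⟦f.1 q⟧) ↔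
      ∀ d, IsAcyclicOn PowFixed.cycle (nonrootCycles σ o d) (cyclesMapEquivPi hσ f d) := by
  refine isParentMap_iff_forall_isAcyclicOn (ℓ := cycleLength σ) (congrArg _ f.2.1) (fun q => ?_)
    fun _ _ => mem_nonrootCycles
  exact Nat.le_of_dvd (cycleLength_pos q) (pow_apply_eq_self_iff_minimalPeriod_dvd.1 (f.2.2 q))

/-- An equivariant parent map is determined by one value on each cycle other than that of the root.
The cycles of a given length can be treated separately, since the parent of a vertex lies in a cycle
of the same length or in a shorter one. -/
noncomputable def equivariantParentMapEquivPi (hσ : σ o = o) :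
    {p : V → V // IsParentMap o p ∧ Semiconj p σ σ} ≃
      ∀ d, {f : nonrootCycles σ o d → PowFixed σ d //
        IsAcyclicOn PowFixed.cycle (nonrootCycles σ o d) f} :=
  calc {p : V → V // IsParentMap o p ∧ Semiconj p σ σ}
    _ ≃ {p : {p : V → V // Semiconj p σ σ} // IsParentMap o p.1} :=
      ⟨fun p => ⟨⟨p.1, p.2.2⟩, p.2.1⟩, fun p => ⟨p.1.1, p.2, p.1.2⟩, fun _ => rfl, fun _ => rfl⟩
    _ ≃ {f : {f : Cycles σ → V // ∀ q, (σ ^ cycleLength σ q) (f q) = f q} //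
          IsParentMap (⟦o⟧ : Cycles σ) fun q => ⟦f.1 q⟧} :=
      (equivariantMapEquiv σ σ).subtypeEquiv fun p => isParentMap_iff_isParentMap_cycles hσ p.2
    _ ≃ {f : {f : Cycles σ → V // f ⟦o⟧ = o ∧ ∀ q, (σ ^ cycleLength σ q) (f q) = f q} //
          IsParentMap (⟦o⟧ : Cycles σ) fun q => ⟦f.1 q⟧} :=
      ⟨fun f => ⟨⟨f.1.1, (mk_eq_mk_root_iff hσ).1 f.2.1, f.1.2⟩, f.2⟩,
        fun f => ⟨⟨f.1.1, f.1.2.2⟩, f.2⟩, fun _ => rfl, fun _ => rfl⟩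
    _ ≃ {F : ∀ d, nonrootCycles σ o d → PowFixed σ d //
          ∀ d, IsAcyclicOn PowFixed.cycle (nonrootCycles σ o d) (F d)} :=
      (cyclesMapEquivPi hσ).subtypeEquiv (isParentMap_cycles_iff_forall_isAcyclicOn hσ)
    _ ≃ _ := Equiv.subtypePiEquivPi

theorem PowFixed.cycle_notMem_nonrootCycles_iff (hσ : σ o = o) {d : ℕ} {x : PowFixed σ d} :
    x.cycle ∉ nonrootCycles σ o d ↔ x.IsTerminal o := by
  rw [mem_nonrootCycles, not_and_not_right, PowFixed.cycle, mk_eq_mk_root_iff hσ]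
  rfl

/-- The Prüfer bijection for the cycles of length `d`. -/
noncomputable def acyclicEquivPruferBlock [LinearOrder (Cycles σ)] (hσ : σ o = o) (d : ℕ) :
    {f : nonrootCycles σ o d → PowFixed σ d //
        IsAcyclicOn PowFixed.cycle (nonrootCycles σ o d) f} ≃
      PruferBlock σ o d (nonrootCycles σ o d).card :=
  (pruferCodeEquiv _ _).trans <| Equiv.subtypeEquivRight fun _ =>
    forall_congr' fun _ => PowFixed.cycle_notMem_nonrootCycles_iff hσ

theorem sigma_prufer_bijection_general (hσ : σ o = o) :
    Nonempty ((∀ d, PruferBlock σ o d (nonrootCycles σ o d).card) ≃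
      {T : SimpleGraph V // T.IsTree ∧ ∀ v w, T.Adj v w ↔ T.Adj (σ v) (σ w)}) := by
  let _ : LinearOrder (Cycles σ) := IsWellOrder.linearOrder WellOrderingRel
  exact ⟨(Equiv.piCongrRight fun d => (acyclicEquivPruferBlock hσ d).symm).trans <|
    (equivariantParentMapEquivPi hσ).symm.trans (equivariantParentMapEquiv σ hσ)⟩

end Blocks

section Fin

variable {n : ℕ} {hn : 0 < n} {σ : Equiv.Perm (Fin n)}

theorem cycleCount_eq_ncard (d : ℕ) :
    cycleCount σ d = {q : Cycles σ | cycleLength σ q = d}.ncard := by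
  have hcard : (Finset.univ.filter fun i => minimalPeriod σ i = d).card =
      {q : Cycles σ | cycleLength σ q = d}.ncard * d := by
    rw [← natCard_minimalPeriod_eq, Nat.card_eq_fintype_card, Fintype.card_subtype]
  rcases d.eq_zero_or_pos with rfl | hd
  · have hempty : {q : Cycles σ | cycleLength σ q = 0} = ∅ :=
      Set.eq_empty_of_forall_notMem fun q => (cycleLength_pos q).ne'
    rw [hempty, Set.ncard_empty, cycleCount, Nat.div_zero]
  · rw [cycleCount, hcard, Nat.mul_div_cancel _ hd]

theorem card_nonrootCycles {o : Fin n} (hσ : σ o = o) (d : ℕ) :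
    (nonrootCycles σ o d).card = pruferLen σ d := by
  have hroot : cycleLength σ ⟦o⟧ = 1 := minimalPeriod_eq_one_iff_isFixedPt.2 hσ
  have hcoe : (nonrootCycles σ o d : Set (Cycles σ)) = {q | cycleLength σ q = d} \ {⟦o⟧} := by
    ext q
    exact mem_nonrootCycles
  rw [← Set.ncard_coe_finset, hcoe, pruferLen]
  split_ifs with hd
  · have hmem : (⟦o⟧ : Cycles σ) ∈ {q | cycleLength σ q = d} := hroot.trans hd.symm
    rw [Set.ncard_sdiff_singleton_of_mem hmem, hd, cycleCount_eq_ncard]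
  · rw [Set.sdiff_singleton_eq_self fun h => hd (h.symm.trans hroot), cycleCount_eq_ncard]

/-- A `σ`-Prüfer sequence as a family of independent blocks. The block for `d = 0` is empty. -/
noncomputable def sigmaPruferSeqEquiv (hσ : σ ⟨0, hn⟩ = ⟨0, hn⟩) :
    SigmaPruferSeq σ ≃ ∀ d, PruferBlock σ ⟨0, hn⟩ d (pruferLen σ d) where
  toFun t d := ⟨fun i => ⟨t.s d i, t.entries_mem d i⟩, fun h => by
    obtain _ | _ | d := d
    · simp [pruferLen, cycleCount] at h
    · exact PowFixed.isTerminal_one_iff.2 (Fin.ext (t.last_one h))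
    · have hd : 2 ≤ d + 2 := Nat.le_add_left 2 d
      exact (PowFixed.isTerminal_iff_exists_dvd_lt hσ hd).2 (t.last_of_ge_two _ hd h)⟩
  invFun F :=
    { s := fun d i => ((F d).1 i).1
      entries_mem := fun d i => ((F d).1 i).2
      last_one := fun h => Fin.ext_iff.1 (PowFixed.isTerminal_one_iff.1 ((F 1).2 h))
      last_of_ge_two := fun d hd h =>
        (PowFixed.isTerminal_iff_exists_dvd_lt hσ hd).1 ((F d).2 h) }
  left_inv _ := rfl
  right_inv _ := rfl

end Fin

/-- σ-Prüfer sequences are in bijection with σ-invariant labeled trees on `[n]`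
(rooted at the vertex `1`, i.e. `0 : Fin n`). -/
theorem sigma_prufer_bijection (n : ℕ) (hn : 0 < n) (σ : Equiv.Perm (Fin n))
    (hσ : σ ⟨0, hn⟩ = ⟨0, hn⟩) :
    Nonempty (SigmaPruferSeq σ ≃
      {T : SimpleGraph (Fin n) //
        T.IsTree ∧ ∀ i j : Fin n, T.Adj i j ↔ T.Adj (σ i) (σ j)}) :=
  (sigma_prufer_bijection_general hσ).map fun e => (sigmaPruferSeqEquiv hσ).trans <|
    (Equiv.piCongrRight fun d => Equiv.cast (by rw [card_nonrootCycles hσ])).trans e
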